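/- Let p > 2. Then X_4^(h), the 4-tuple of unit vectors (cos(kπ/4), sin(kπ/4)) ∈ ℝ² for k = 0,1,2,3, satisfies FP_{p,4,2}(X_4^(h)) ≤ FP_{p,4,2}(X) for every X ∈ S(4,2), and every X ∈ S(4,2) attaining equality is equivalent to X_4^(h). -/

import Mathlib

open scoped RealInnerProductSpace
open Real

/-- `X_N^(h)`: the `N`-tuple of unit vectors `(cos(kπ/N), sin(kπ/N))`, `k = 0,…,N−1`,
i.e. `N` equally spaced points on the half circle. -/
noncomputable def halfCircle (N : ℕ) : Fin N → EuclideanSpace ℝ (Fin 2) :=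
  fun k => (WithLp.equiv 2 (Fin 2 → ℝ)).symm
    ![cos ((k : ℕ) * π / N), sin ((k : ℕ) * π / N)]

/-- Two configurations are equivalent if one is obtained from the other by an orthogonal
transformation, a permutation of the points, and sign switches. -/
def EquivConfig (d N : ℕ) (X Y : Fin N → EuclideanSpace ℝ (Fin d)) : Prop :=
  ∃ (U : EuclideanSpace ℝ (Fin d) ≃ₗᵢ[ℝ] EuclideanSpace ℝ (Fin d))
    (σ : Equiv.Perm (Fin N)) (s : Fin N → ℝ),
    (∀ i, s i = 1 ∨ s i = -1) ∧ ∀ i, Y i = s i • U (X (σ i))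

/-- The `p`-frame potential `FP_{p,N,d}(X) = Σ_{k≠ℓ} |⟨x_k,x_ℓ⟩|^p`. -/
noncomputable def framePotential (d N : ℕ) (p : ℝ)
    (X : Fin N → EuclideanSpace ℝ (Fin d)) : ℝ :=
  ∑ k : Fin N, ∑ l : Fin N, if k ≠ l then |⟪X k, X l⟫| ^ p else 0

/-!
Write the vectors as unit vectors at angles `θ k` and put `q = p / 2 > 1`. As
`2 cos² d = 1 + cos 2d`, the frame potential is, up to the factor `2 ^ q`, the sum over `k ≠ l`
of `(1 + cos 2(θ k - θ l)) ^ q`, and the half circle gives the value `8`.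

For `q ≥ 2` the minorant `1 + q t + (q - 1) t² ≤ (1 + t) ^ q`, tight exactly at the values
`t = -1, 0` taken by the half circle when `q > 2`, reduces the bound to the positive
semidefiniteness of the kernels `cos 2(s - t)` and `cos 4(s - t)`.

For `q < 2` this minorant fails, and at `q = 2` it is an identity. For `q ≤ 2`, the four lines
split into two pairs in three ways, and convexity of `t ↦ t ^ q` within each splitting bounds the
energy below by `4 [(1 + xy) ^ q + (1 + yz) ^ q + (1 + zx) ^ q]` for three cosines `x`, `y`, `z`.
One of the three products is nonnegative, which reduces the problem to
`2 ≤ (1 + xy) ^ q + (1 - x) ^ q + (1 - y) ^ q` for `x, y ∈ [0, 1]`; for `x ≤ y` this follows from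
a second order Taylor bound for `(1 + xy) ^ q + (1 - x) ^ q` and Young's inequality for
`x (1 - y)`.

At equality every angle difference is a multiple of `π / 4` but not of `π`.
-/

section PowerInequalities

theorem quadratic_le_one_add_rpow {q t : ℝ} (hq : 2 ≤ q) (ht : -1 ≤ t) :
    1 + q * t + (q - 1) * t ^ 2 ≤ (1 + t) ^ q := by
  have bernoulli := one_add_mul_self_le_rpow_one_add ht (by linarith : 1 ≤ q - 1)
  have hpow : (1 + t) ^ q = (1 + t) * (1 + t) ^ (q - 1) := by
    rw [← Real.rpow_one_add' (by linarith) (by linarith), add_sub_cancel]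
  rw [hpow]
  linarith [mul_le_mul_of_nonneg_left bernoulli (by linarith : 0 ≤ 1 + t)]

theorem eq_neg_one_or_eq_zero_of_one_add_rpow_eq {q t : ℝ} (hq : 2 < q) (ht : -1 ≤ t)
    (h : 1 + q * t + (q - 1) * t ^ 2 = (1 + t) ^ q) : t = -1 ∨ t = 0 := by
  by_contra! hne
  have hpos : 0 < 1 + t := by linarith [lt_of_le_of_ne ht hne.1.symm]
  have bernoulli := one_add_mul_self_lt_rpow_one_add ht hne.2 (by linarith : 1 < q - 1)
  have hpow : (1 + t) ^ q = (1 + t) * (1 + t) ^ (q - 1) := by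
    rw [← Real.rpow_one_add' hpos.le (by linarith), add_sub_cancel]
  rw [hpow] at h
  linarith [mul_lt_mul_of_pos_left bernoulli hpos]

theorem hasDerivAt_one_add_rpow {r v : ℝ} (h : 1 + v ≠ 0 ∨ 1 ≤ r) :
    HasDerivAt (fun v : ℝ => (1 + v) ^ r) (r * (1 + v) ^ (r - 1)) v := by
  simpa using ((hasDerivAt_id v).const_add 1).rpow_const h

theorem hasDerivAt_one_sub_rpow {r v : ℝ} (h : 1 - v ≠ 0 ∨ 1 ≤ r) :
    HasDerivAt (fun v : ℝ => (1 - v) ^ r) (-(r * (1 - v) ^ (r - 1))) v := by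
  simpa using ((hasDerivAt_id v).const_sub 1).rpow_const h

theorem two_le_one_add_rpow_add_one_sub_rpow_of_nonpos {s v : ℝ} (hs : s ≤ 0)
    (hv₀ : -1 < v) (hv₁ : v < 1) : 2 ≤ (1 + v) ^ s + (1 - v) ^ s := by
  have hadd : 0 < 1 + v := by linarith
  have hsub : 0 < 1 - v := by linarith
  have hprod : 1 ≤ (1 + v) ^ s * (1 - v) ^ s := by
    rw [← Real.mul_rpow hadd.le hsub.le]
    exact Real.one_le_rpow_of_pos_of_le_one_of_nonpos (by positivity)
      (by nlinarith [sq_nonneg v]) hs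
  nlinarith [sq_nonneg ((1 + v) ^ s - (1 - v) ^ s), Real.rpow_pos_of_pos hadd s,
    Real.rpow_pos_of_pos hsub s]

theorem two_mul_le_one_add_rpow_sub_one_sub_rpow {r v : ℝ} (hr₀ : 0 ≤ r) (hr₁ : r ≤ 1)
    (hv : v ∈ Set.Icc (0 : ℝ) 1) : 2 * r * v ≤ (1 + v) ^ r - (1 - v) ^ r := by
  have hmono : MonotoneOn (fun v : ℝ => (1 + v) ^ r - (1 - v) ^ r - 2 * r * v)
      (Set.Icc 0 1) := by
    refine monotoneOn_of_hasDerivWithinAt_nonneg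
      (f' := fun v => r * ((1 + v) ^ (r - 1) + (1 - v) ^ (r - 1) - 2))
      (convex_Icc 0 1) (by fun_prop (disch := assumption)) (fun v hv => ?_) (fun v hv => ?_)
    all_goals rw [interior_Icc] at hv
    · have hadd := hasDerivAt_one_add_rpow (r := r) (.inl (by linarith [hv.1] : 1 + v ≠ 0))
      have hsub := hasDerivAt_one_sub_rpow (r := r) (.inl (by linarith [hv.2] : 1 - v ≠ 0))
      refine (((hadd.sub hsub).sub
        ((hasDerivAt_id v).const_mul (2 * r))).congr_deriv ?_).hasDerivWithinAt
      ring
    · have := two_le_one_add_rpow_add_one_sub_rpow_of_nonpos (by linarith : r - 1 ≤ 0)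
        (by linarith [hv.1]) hv.2
      exact mul_nonneg hr₀ (by linarith)
  have := hmono ⟨le_rfl, zero_le_one⟩ hv hv.1
  simp only [add_zero, sub_zero, mul_zero, sub_self] at this
  linarith

theorem quadratic_le_one_add_rpow_add_one_sub_rpow {q s : ℝ} (hq₁ : 1 ≤ q) (hq₂ : q ≤ 2)
    (hs : s ∈ Set.Icc (0 : ℝ) 1) : 2 + q * (q - 1) * s ^ 2 ≤ (1 + s) ^ q + (1 - s) ^ q := by
  have hmono : MonotoneOn (fun v : ℝ => (1 + v) ^ q + (1 - v) ^ q - q * (q - 1) * v ^ 2)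
      (Set.Icc 0 1) := by
    refine monotoneOn_of_hasDerivWithinAt_nonneg
      (f' := fun v => q * ((1 + v) ^ (q - 1) - (1 - v) ^ (q - 1) - 2 * (q - 1) * v))
      (convex_Icc 0 1) (by fun_prop (disch := linarith)) (fun v _ => ?_) (fun v hv => ?_)
    · refine ((((hasDerivAt_one_add_rpow (.inr hq₁)).add
        (hasDerivAt_one_sub_rpow (.inr hq₁))).sub
        ((hasDerivAt_pow 2 v).const_mul (q * (q - 1)))).congr_deriv ?_).hasDerivWithinAt
      ring
    · have := two_mul_le_one_add_rpow_sub_one_sub_rpow (sub_nonneg.2 hq₁) (by linarith)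
        (interior_subset hv)
      exact mul_nonneg (by linarith) (by linarith)
  have := hmono ⟨le_rfl, zero_le_one⟩ hs hs.1
  simp only [add_zero, sub_zero, Real.one_rpow, ne_eq, OfNat.ofNat_ne_zero, not_false_eq_true,
    zero_pow, mul_zero] at this
  linarith

theorem monotoneOn_one_sub_rpow_sub_taylor {q : ℝ} (hq₁ : 1 ≤ q) (hq₂ : q ≤ 2) :
    MonotoneOn (fun v : ℝ => (1 - v) ^ q + q * v - q * (q - 1) / 2 * v ^ 2)
      (Set.Icc 0 1) := by
  refine monotoneOn_of_hasDerivWithinAt_nonneg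
    (f' := fun v => q * (1 + (q - 1) * -v - (1 - v) ^ (q - 1)))
    (convex_Icc 0 1) (by fun_prop (disch := linarith)) (fun v _ => ?_) (fun v hv => ?_)
  · refine ((((hasDerivAt_one_sub_rpow (.inr hq₁)).add ((hasDerivAt_id v).const_mul q)).sub
      ((hasDerivAt_pow 2 v).const_mul (q * (q - 1) / 2))).congr_deriv ?_).hasDerivWithinAt
    ring
  · have hv₁ : v ≤ 1 := (interior_subset hv).2
    have bernoulli := rpow_one_add_le_one_add_mul_self (by linarith : -1 ≤ -v)
      (sub_nonneg.2 hq₁) (by linarith)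
    rw [← sub_eq_add_neg] at bernoulli
    exact mul_nonneg (by linarith) (by linarith)

theorem taylor_le_one_add_rpow_add_one_sub_rpow {q s t : ℝ} (hq₁ : 1 ≤ q) (hq₂ : q ≤ 2)
    (hs : 0 ≤ s) (hst : s ≤ t) (ht : t ≤ 1) :
    2 + q * (s - t) + q * (q - 1) / 2 * (s ^ 2 + t ^ 2) ≤ (1 + s) ^ q + (1 - t) ^ q := by
  have hmono := monotoneOn_one_sub_rpow_sub_taylor hq₁ hq₂ ⟨hs, hst.trans ht⟩
    ⟨hs.trans hst, ht⟩ hst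
  have hdiag := quadratic_le_one_add_rpow_add_one_sub_rpow hq₁ hq₂ ⟨hs, hst.trans ht⟩
  simp only at hmono
  linarith

theorem mul_mul_le_rpow_add_mul_rpow {q b z : ℝ} (hq : 1 < q) (hb : 0 ≤ b) (hz : 0 ≤ z) :
    q * b * z ≤ b ^ q + (q - 1) * z ^ (q / (q - 1)) := by
  have young := Real.young_inequality_of_nonneg hb hz (Real.HolderConjugate.conjExponent hq)
  have hq₀ : q ≠ 0 := by linarith
  have hq₁ : q - 1 ≠ 0 := sub_ne_zero.2 hq.ne'
  calc q * b * z = q * (b * z) := by ring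
    _ ≤ q * (b ^ q / q + z ^ (q / (q - 1)) / (q / (q - 1))) :=
      mul_le_mul_of_nonneg_left young (by linarith)
    _ = b ^ q + (q - 1) * z ^ (q / (q - 1)) := by field_simp [hq₁]

theorem rpow_lt_half_mul_one_add_sq {q e z : ℝ} (hq : 1 < q) (hqe : 2 - e ≤ q) (he : 0 ≤ e)
    (hz₀ : 0 < z) (hz₁ : z ≤ 1) : z ^ e < q / 2 * (1 + z ^ 2) := by
  have hz₂ : z ^ 2 ≤ 1 := pow_le_one₀ hz₀.le hz₁
  have hzpos : 0 < z ^ 2 := by positivity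
  rcases le_total 2 e with h | h
  · have : z ^ e ≤ z ^ 2 := by
      simpa using Real.rpow_le_rpow_of_exponent_ge hz₀ hz₁ h
    linarith [mul_pos (sub_pos.2 hq) hzpos]
  · have hpow : z ^ e = (1 + (z ^ 2 - 1)) ^ (e / 2) := by
      rw [add_sub_cancel, ← Real.rpow_natCast, ← Real.rpow_mul hz₀.le]
      congr 1
      push_cast
      ring
    have bernoulli := rpow_one_add_le_one_add_mul_self (by linarith : -1 ≤ z ^ 2 - 1)
      (by linarith : 0 ≤ e / 2) (by linarith)
    rw [hpow]
    linarith [mul_nonneg (sub_nonneg.2 hz₂) (by linarith : 0 ≤ q - 2 + e),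
      mul_pos (sub_pos.2 hq) hzpos]

theorem rpow_conjExponent_lt {q z : ℝ} (hq₁ : 1 < q) (hq₂ : q ≤ 2) (hz₀ : 0 < z)
    (hz₁ : z ≤ 1) : z ^ (q / (q - 1)) < q / 2 * (z ^ 2 + z ^ 4) := by
  have hr : 0 < q - 1 := by linarith
  have hexp : q / (q - 1) = 2 + (2 - q) / (q - 1) := by
    field_simp
    ring
  have hqe : 2 - (2 - q) / (q - 1) ≤ q := by
    have : q - (2 - (2 - q) / (q - 1)) = (2 - q) ^ 2 / (q - 1) := by
      field_simp
      ring
    linarith [(by positivity : 0 ≤ (2 - q) ^ 2 / (q - 1))]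
  have hlt := rpow_lt_half_mul_one_add_sq hq₁ hqe
    (div_nonneg (by linarith) hr.le) hz₀ hz₁
  calc z ^ (q / (q - 1)) = z ^ 2 * z ^ ((2 - q) / (q - 1)) := by
        rw [hexp, Real.rpow_add hz₀, Real.rpow_ofNat]
    _ < z ^ 2 * (q / 2 * (1 + z ^ 2)) := mul_lt_mul_of_pos_left hlt (by positivity)
    _ = q / 2 * (z ^ 2 + z ^ 4) := by ring

end PowerInequalities

section PairingSum

theorem two_lt_one_add_mul_rpow_add {q x y : ℝ} (hq₁ : 1 < q) (hq₂ : q ≤ 2) (hx : 0 < x)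
    (hxy : x ≤ y) (hy : y ≤ 1) : 2 < (1 + x * y) ^ q + (1 - x) ^ q + (1 - y) ^ q := by
  have taylor := taylor_le_one_add_rpow_add_one_sub_rpow hq₁.le hq₂
    (by nlinarith : 0 ≤ x * y) (by nlinarith) (hxy.trans hy)
  have young := mul_mul_le_rpow_add_mul_rpow hq₁ (sub_nonneg.2 hy) hx.le
  have hpow : x ^ (q / (q - 1)) < q / 2 * (x ^ 2 + (x * y) ^ 2) :=
    (rpow_conjExponent_lt hq₁ hq₂ hx (hxy.trans hy)).trans_le <| by
      have : x ^ 4 ≤ (x * y) ^ 2 := by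
        rw [(by ring : x ^ 4 = (x * x) ^ 2)]
        gcongr
      gcongr
  linarith [mul_lt_mul_of_pos_left hpow (sub_pos.2 hq₁)]

theorem two_lt_one_add_mul_rpow_add_or {q x y : ℝ} (hq₁ : 1 < q) (hq₂ : q ≤ 2)
    (hx : x ∈ Set.Icc (0 : ℝ) 1) (hy : y ∈ Set.Icc (0 : ℝ) 1) :
    2 < (1 + x * y) ^ q + (1 - x) ^ q + (1 - y) ^ q ∨ x = 0 ∧ y = 1 ∨ x = 1 ∧ y = 0 := by
  wlog hxy : x ≤ y generalizing x y
  · have := this hy hx (le_of_not_ge hxy)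
    rwa [mul_comm y x, add_right_comm, and_comm, and_comm (a := y = 1), or_comm (a := _ ∧ _)]
      at this
  rcases hx.1.eq_or_lt with rfl | hx₀
  · rcases hy.2.eq_or_lt with rfl | hy₁
    · simp
    · left
      have : 0 < (1 - y) ^ q := Real.rpow_pos_of_pos (by linarith) q
      simp only [zero_mul, add_zero, sub_zero, Real.one_rpow]
      linarith
  · exact .inl (two_lt_one_add_mul_rpow_add hq₁ hq₂ hx₀ hxy hy.2)

/-- Half the lower bound that convexity gives for the energy of four lines, one term for each
splitting of the lines into two pairs; `x`, `y`, `z` are the cosines of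
`θ₀ + θ₃ - θ₁ - θ₂`, `θ₀ + θ₂ - θ₁ - θ₃` and `θ₀ + θ₁ - θ₂ - θ₃`. -/
noncomputable def pairingSum (q x y z : ℝ) : ℝ :=
  (1 + x * y) ^ q + (1 + y * z) ^ q + (1 + z * x) ^ q

theorem pairingSum_rotate (q x y z : ℝ) : pairingSum q y z x = pairingSum q x y z := by
  simp only [pairingSum]
  ring

theorem one_add_mul_nonneg_of_abs_le_one {x y : ℝ} (hx : |x| ≤ 1) (hy : |y| ≤ 1) :
    0 ≤ 1 + x * y := by
  have : |x * y| ≤ 1 := abs_mul x y ▸ mul_le_one₀ hx (abs_nonneg y) hy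
  linarith [neg_le_of_abs_le this]

theorem abs_mul_rpow_add_le_pairingSum {q x y z : ℝ} (hq : 0 ≤ q) (hx : |x| ≤ 1)
    (hy : |y| ≤ 1) (hz : |z| ≤ 1) (hxy : 0 ≤ x * y) :
    (1 + |x| * |y|) ^ q + (1 - |x|) ^ q + (1 - |y|) ^ q ≤ pairingSum q x y z := by
  have neg_abs_le_mul (w : ℝ) : -|w| ≤ w * z := by
    have := mul_le_of_le_one_right (abs_nonneg w) hz
    rw [← abs_mul] at this
    linarith [neg_abs_le (w * z)]
  have hyz : (1 - |y|) ^ q ≤ (1 + y * z) ^ q :=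
    Real.rpow_le_rpow (by linarith) (by linarith [neg_abs_le_mul y]) hq
  have hzx : (1 - |x|) ^ q ≤ (1 + z * x) ^ q :=
    Real.rpow_le_rpow (by linarith) (by linarith [neg_abs_le_mul x]) hq
  rw [← abs_mul, abs_of_nonneg hxy, pairingSum]
  linarith

theorem two_le_pairingSum_of_mul_nonneg {q x y z : ℝ} (hq₁ : 1 < q) (hq₂ : q ≤ 2)
    (hx : |x| ≤ 1) (hy : |y| ≤ 1) (hz : |z| ≤ 1) (hxy : 0 ≤ x * y) :
    2 ≤ pairingSum q x y z := by
  refine le_trans ?_ (abs_mul_rpow_add_le_pairingSum (by linarith) hx hy hz hxy)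
  rcases two_lt_one_add_mul_rpow_add_or hq₁ hq₂ ⟨abs_nonneg x, hx⟩ ⟨abs_nonneg y, hy⟩ with
    hlt | ⟨hx₀, hy₁⟩ | ⟨hx₁, hy₀⟩
  · exact hlt.le
  · norm_num [hx₀, hy₁, Real.zero_rpow (by linarith : q ≠ 0)]
  · norm_num [hx₁, hy₀, Real.zero_rpow (by linarith : q ≠ 0)]

theorem mul_eq_of_pairingSum_eq_two_of_mul_nonneg {q x y z : ℝ} (hq₁ : 1 < q) (hq₂ : q ≤ 2)
    (hx : |x| ≤ 1) (hy : |y| ≤ 1) (hz : |z| ≤ 1) (hxy : 0 ≤ x * y)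
    (h : pairingSum q x y z = 2) :
    (x * y = -1 ∨ x * y = 0) ∧ (y * z = -1 ∨ y * z = 0) ∧ (z * x = -1 ∨ z * x = 0) := by
  have eq_neg_one_of_rpow_eq_zero {w : ℝ} (hw : 0 ≤ 1 + w) (h : (1 + w) ^ q = 0) : w = -1 := by
    linarith [(Real.rpow_eq_zero hw (by linarith)).1 h]
  have hle := abs_mul_rpow_add_le_pairingSum (q := q) (by linarith) hx hy hz hxy
  rcases two_lt_one_add_mul_rpow_add_or hq₁ hq₂ ⟨abs_nonneg x, hx⟩ ⟨abs_nonneg y, hy⟩ with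
    hlt | ⟨hx₀, -⟩ | ⟨-, hy₀⟩
  · linarith
  · obtain rfl := abs_eq_zero.1 hx₀
    simp only [pairingSum, zero_mul, mul_zero, add_zero, Real.one_rpow] at h
    exact ⟨.inr (zero_mul y), .inl (eq_neg_one_of_rpow_eq_zero
      (one_add_mul_nonneg_of_abs_le_one hy hz) (by linarith)), .inr (mul_zero z)⟩
  · obtain rfl := abs_eq_zero.1 hy₀
    simp only [pairingSum, zero_mul, mul_zero, add_zero, Real.one_rpow] at h
    exact ⟨.inr (mul_zero x), .inr (zero_mul z), .inl (eq_neg_one_of_rpow_eq_zero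
      (one_add_mul_nonneg_of_abs_le_one hz hx) (by linarith))⟩

theorem mul_nonneg_or_mul_nonneg_or_mul_nonneg (x y z : ℝ) :
    0 ≤ x * y ∨ 0 ≤ y * z ∨ 0 ≤ z * x := by
  by_contra! h
  nlinarith [mul_pos (mul_pos_of_neg_of_neg h.1 h.2.1) (neg_pos.2 h.2.2), sq_nonneg (x * y * z)]

theorem two_le_pairingSum {q x y z : ℝ} (hq₁ : 1 < q) (hq₂ : q ≤ 2)
    (hx : |x| ≤ 1) (hy : |y| ≤ 1) (hz : |z| ≤ 1) : 2 ≤ pairingSum q x y z := by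
  rcases mul_nonneg_or_mul_nonneg_or_mul_nonneg x y z with h | h | h
  · exact two_le_pairingSum_of_mul_nonneg hq₁ hq₂ hx hy hz h
  · rw [← pairingSum_rotate]
    exact two_le_pairingSum_of_mul_nonneg hq₁ hq₂ hy hz hx h
  · rw [← pairingSum_rotate, ← pairingSum_rotate]
    exact two_le_pairingSum_of_mul_nonneg hq₁ hq₂ hz hx hy h

theorem mul_eq_of_pairingSum_eq_two {q x y z : ℝ} (hq₁ : 1 < q) (hq₂ : q ≤ 2)
    (hx : |x| ≤ 1) (hy : |y| ≤ 1) (hz : |z| ≤ 1) (h : pairingSum q x y z = 2) :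
    (x * y = -1 ∨ x * y = 0) ∧ (y * z = -1 ∨ y * z = 0) ∧ (z * x = -1 ∨ z * x = 0) := by
  rcases mul_nonneg_or_mul_nonneg_or_mul_nonneg x y z with hxy | hyz | hzx
  · exact mul_eq_of_pairingSum_eq_two_of_mul_nonneg hq₁ hq₂ hx hy hz hxy h
  · rw [← pairingSum_rotate] at h
    obtain ⟨ryz, rzx, rxy⟩ := mul_eq_of_pairingSum_eq_two_of_mul_nonneg hq₁ hq₂ hy hz hx hyz h
    exact ⟨rxy, ryz, rzx⟩
  · rw [← pairingSum_rotate, ← pairingSum_rotate] at h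
    obtain ⟨rzx, rxy, ryz⟩ := mul_eq_of_pairingSum_eq_two_of_mul_nonneg hq₁ hq₂ hz hx hy hzx h
    exact ⟨rxy, ryz, rzx⟩

end PairingSum

section LineEnergy

variable {ι : Type*} [Fintype ι]

theorem sum_sum_cos_sub (a : ι → ℝ) :
    ∑ i, ∑ j, cos (a i - a j) = (∑ i, cos (a i)) ^ 2 + (∑ i, sin (a i)) ^ 2 := by
  simp only [cos_sub, Finset.sum_add_distrib, sq, Finset.sum_mul_sum]

variable [DecidableEq ι]

/-- The pair energy, with potential `f`, of the lines at angles `θ k`. It is a function of the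
doubled angles, which do not depend on the choice of a unit vector on each line; the frame
potential with exponent `2 * q` has `f t = (1 + t) ^ q` up to the factor `2 ^ q`. -/
noncomputable def lineEnergy (f : ℝ → ℝ) (θ : ι → ℝ) : ℝ :=
  ∑ k, ∑ l, if k ≠ l then f (cos (2 * (θ k - θ l))) else 0

theorem lineEnergy_le_lineEnergy {f g : ℝ → ℝ} (hfg : ∀ t ∈ Set.Icc (-1 : ℝ) 1, f t ≤ g t)
    (θ : ι → ℝ) : lineEnergy f θ ≤ lineEnergy g θ := by
  unfold lineEnergy
  gcongr with k _ l _
  split_ifs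
  exacts [hfg _ (cos_mem_Icc _), le_rfl]

theorem apply_cos_eq_of_lineEnergy_eq {f g : ℝ → ℝ} (hfg : ∀ t ∈ Set.Icc (-1 : ℝ) 1, f t ≤ g t)
    {θ : ι → ℝ} (h : lineEnergy f θ = lineEnergy g θ) {k l : ι} (hkl : k ≠ l) :
    f (cos (2 * (θ k - θ l))) = g (cos (2 * (θ k - θ l))) := by
  have hle (k l : ι) : (if k ≠ l then f (cos (2 * (θ k - θ l))) else 0) ≤
      if k ≠ l then g (cos (2 * (θ k - θ l))) else 0 := by
    split_ifs
    exacts [hfg _ (cos_mem_Icc _), le_rfl]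
  have hrow := (Finset.sum_eq_sum_iff_of_le fun k _ => Finset.sum_le_sum fun l _ => hle k l).1 h
    k (Finset.mem_univ k)
  have hterm := (Finset.sum_eq_sum_iff_of_le fun l _ => hle k l).1 hrow l (Finset.mem_univ l)
  rwa [if_pos hkl, if_pos hkl] at hterm

theorem le_lineEnergy_quadratic (a : ℝ) {b c : ℝ} (hb : 0 ≤ b) (hc : 0 ≤ c) (θ : ι → ℝ) :
    Fintype.card ι ^ 2 * (a + c / 2) - Fintype.card ι * (a + b + c) ≤
      lineEnergy (fun t => a + b * t + c * t ^ 2) θ := by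
  have hterm (k l : ι) : (if k ≠ l then
      a + b * cos (2 * (θ k - θ l)) + c * cos (2 * (θ k - θ l)) ^ 2 else 0) =
      (a + c / 2) + b * cos (2 * θ k - 2 * θ l) + c / 2 * cos (4 * θ k - 4 * θ l) -
        if k = l then a + b + c else 0 := by
    have hdouble : cos (4 * θ k - 4 * θ l) = 2 * cos (2 * (θ k - θ l)) ^ 2 - 1 := by
      rw [← cos_two_mul]
      ring_nf
    rw [hdouble, ← mul_sub]
    by_cases hkl : k = l
    · rw [if_neg (not_not.2 hkl), if_pos hkl, hkl, sub_self, mul_zero, cos_zero]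
      ring
    · rw [if_pos hkl, if_neg hkl]
      ring
  have hcos₂ : 0 ≤ ∑ k, ∑ l, cos (2 * θ k - 2 * θ l) := by
    rw [sum_sum_cos_sub fun k => 2 * θ k]
    positivity
  have hcos₄ : 0 ≤ ∑ k, ∑ l, cos (4 * θ k - 4 * θ l) := by
    rw [sum_sum_cos_sub fun k => 4 * θ k]
    positivity
  simp only [lineEnergy, hterm, Finset.sum_sub_distrib, Finset.sum_add_distrib,
    ← Finset.mul_sum, Finset.sum_const, Finset.sum_ite_eq, Finset.mem_univ, if_true,
    Finset.card_univ, nsmul_eq_mul]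
  linarith [mul_nonneg hb hcos₂, mul_nonneg (div_nonneg hc zero_le_two) hcos₄]

theorem le_lineEnergy_rpow {q : ℝ} (hq : 2 ≤ q) (θ : ι → ℝ) :
    Fintype.card ι ^ 2 * ((q + 1) / 2) - Fintype.card ι * (2 * q) ≤
      lineEnergy (fun t => (1 + t) ^ q) θ :=
  calc _ = (Fintype.card ι ^ 2 * (1 + (q - 1) / 2) -
        Fintype.card ι * (1 + q + (q - 1)) : ℝ) := by ring
    _ ≤ lineEnergy (fun t => 1 + q * t + (q - 1) * t ^ 2) θ :=
      le_lineEnergy_quadratic 1 (by linarith) (by linarith) θ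
    _ ≤ lineEnergy (fun t => (1 + t) ^ q) θ :=
      lineEnergy_le_lineEnergy (fun _ ht => quadratic_le_one_add_rpow hq ht.1) θ

theorem cos_eq_of_lineEnergy_rpow_eq {q : ℝ} (hq : 2 < q) {θ : ι → ℝ}
    (h : lineEnergy (fun t => (1 + t) ^ q) θ =
      Fintype.card ι ^ 2 * ((q + 1) / 2) - Fintype.card ι * (2 * q)) {k l : ι} (hkl : k ≠ l) :
    cos (2 * (θ k - θ l)) = -1 ∨ cos (2 * (θ k - θ l)) = 0 := by
  have hle (t : ℝ) (ht : t ∈ Set.Icc (-1 : ℝ) 1) := quadratic_le_one_add_rpow hq.le ht.1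
  have hquadratic := le_lineEnergy_quadratic 1 (by linarith : 0 ≤ q) (by linarith : 0 ≤ q - 1) θ
  have heq := (lineEnergy_le_lineEnergy hle θ).antisymm (by linarith)
  exact eq_neg_one_or_eq_zero_of_one_add_rpow_eq hq (neg_one_le_cos _)
    (apply_cos_eq_of_lineEnergy_eq hle heq hkl)

end LineEnergy

section FourLines

theorem two_mul_add_div_two_rpow_le {q u v : ℝ} (hq : 1 ≤ q) (hu : 0 ≤ u) (hv : 0 ≤ v) :
    2 * ((u + v) / 2) ^ q ≤ u ^ q + v ^ q := by
  have := (convexOn_rpow hq).2 hu hv one_half_pos.le one_half_pos.le (add_halves 1)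
  simp only [smul_eq_mul, ← mul_add] at this
  rw [div_eq_inv_mul, ← one_div]
  linarith

theorem eq_of_two_mul_add_div_two_rpow_eq {q u v : ℝ} (hq : 1 < q) (hu : 0 ≤ u) (hv : 0 ≤ v)
    (h : 2 * ((u + v) / 2) ^ q = u ^ q + v ^ q) : u = v := by
  by_contra hne
  have := (strictConvexOn_rpow hq).2 hu hv hne one_half_pos one_half_pos (add_halves 1)
  simp only [smul_eq_mul, ← mul_add] at this
  rw [div_eq_inv_mul, ← one_div] at h
  linarith

theorem one_add_cos_mul_cos (a b : ℝ) :
    1 + cos a * cos b = ((1 + cos (a + b)) + (1 + cos (a - b))) / 2 := by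
  rw [cos_add, cos_sub]
  ring

theorem one_add_cos_nonneg (a : ℝ) : 0 ≤ 1 + cos a := by
  linarith [neg_one_le_cos a]

theorem two_mul_one_add_cos_mul_cos_rpow_le {q : ℝ} (hq : 1 ≤ q) (a b : ℝ) :
    2 * (1 + cos a * cos b) ^ q ≤ (1 + cos (a + b)) ^ q + (1 + cos (a - b)) ^ q := by
  rw [one_add_cos_mul_cos]
  exact two_mul_add_div_two_rpow_le hq (one_add_cos_nonneg _) (one_add_cos_nonneg _)

theorem cos_add_sub_eq_of_two_mul_rpow_eq {q a b : ℝ} (hq : 1 < q)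
    (h : 2 * (1 + cos a * cos b) ^ q = (1 + cos (a + b)) ^ q + (1 + cos (a - b)) ^ q) :
    cos (a + b) = cos a * cos b ∧ cos (a - b) = cos a * cos b := by
  rw [one_add_cos_mul_cos] at h
  have heq := eq_of_two_mul_add_div_two_rpow_eq hq (one_add_cos_nonneg _)
    (one_add_cos_nonneg _) h
  have := one_add_cos_mul_cos a b
  exact ⟨by linarith, by linarith⟩

theorem cos_two_mul_sub_comm (s t : ℝ) : cos (2 * (s - t)) = cos (2 * (t - s)) := by
  rw [← cos_neg]
  ring_nf

theorem lineEnergy_fin_four (f : ℝ → ℝ) (θ : Fin 4 → ℝ) :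
    lineEnergy f θ = 2 * (f (cos (2 * (θ 0 - θ 1))) + f (cos (2 * (θ 3 - θ 2))) +
      (f (cos (2 * (θ 0 - θ 3))) + f (cos (2 * (θ 2 - θ 1)))) +
      (f (cos (2 * (θ 0 - θ 2))) + f (cos (2 * (θ 1 - θ 3))))) := by
  simp only [lineEnergy, Fin.sum_univ_four, Fin.reduceEq, ne_eq, not_true_eq_false,
    not_false_eq_true, if_true, if_false]
  rw [cos_two_mul_sub_comm (θ 1) (θ 0), cos_two_mul_sub_comm (θ 2) (θ 0),
    cos_two_mul_sub_comm (θ 3) (θ 0), cos_two_mul_sub_comm (θ 1) (θ 2),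
    cos_two_mul_sub_comm (θ 3) (θ 1), cos_two_mul_sub_comm (θ 2) (θ 3)]
  ring

theorem forall_ne_fin_four {P : ℝ → Prop} {θ : Fin 4 → ℝ}
    (h₀₁ : P (cos (2 * (θ 0 - θ 1)))) (h₃₂ : P (cos (2 * (θ 3 - θ 2))))
    (h₀₃ : P (cos (2 * (θ 0 - θ 3)))) (h₂₁ : P (cos (2 * (θ 2 - θ 1))))
    (h₀₂ : P (cos (2 * (θ 0 - θ 2)))) (h₁₃ : P (cos (2 * (θ 1 - θ 3))))
    (k l : Fin 4) (hkl : k ≠ l) : P (cos (2 * (θ k - θ l))) := by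
  fin_cases k <;> fin_cases l <;> first | exact absurd rfl hkl | assumption |
    (rw [cos_two_mul_sub_comm]; assumption)

theorem exists_pairing_angles (θ : Fin 4 → ℝ) : ∃ α β γ,
    2 * (θ 0 - θ 1) = α + β ∧ 2 * (θ 3 - θ 2) = α - β ∧
    2 * (θ 0 - θ 3) = β + γ ∧ 2 * (θ 2 - θ 1) = β - γ ∧
    2 * (θ 0 - θ 2) = γ + α ∧ 2 * (θ 1 - θ 3) = γ - α := by
  refine ⟨θ 0 + θ 3 - θ 1 - θ 2, θ 0 + θ 2 - θ 1 - θ 3, θ 0 + θ 1 - θ 2 - θ 3, ?_⟩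
  refine ⟨?_, ?_, ?_, ?_, ?_, ?_⟩ <;> ring

theorem eight_le_lineEnergy_rpow_of_le_two {q : ℝ} (hq₁ : 1 < q) (hq₂ : q ≤ 2)
    (θ : Fin 4 → ℝ) : 8 ≤ lineEnergy (fun t => (1 + t) ^ q) θ := by
  obtain ⟨α, β, γ, h₀₁, h₃₂, h₀₃, h₂₁, h₀₂, h₁₃⟩ := exists_pairing_angles θ
  have hmin := two_le_pairingSum hq₁ hq₂ (abs_cos_le_one α) (abs_cos_le_one β) (abs_cos_le_one γ)
  rw [pairingSum] at hmin
  rw [lineEnergy_fin_four, h₀₁, h₃₂, h₀₃, h₂₁, h₀₂, h₁₃]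
  linarith [two_mul_one_add_cos_mul_cos_rpow_le hq₁.le α β,
    two_mul_one_add_cos_mul_cos_rpow_le hq₁.le β γ,
    two_mul_one_add_cos_mul_cos_rpow_le hq₁.le γ α]

theorem cos_eq_of_lineEnergy_rpow_eq_eight_of_le_two {q : ℝ} (hq₁ : 1 < q) (hq₂ : q ≤ 2)
    {θ : Fin 4 → ℝ} (h : lineEnergy (fun t => (1 + t) ^ q) θ = 8) {k l : Fin 4} (hkl : k ≠ l) :
    cos (2 * (θ k - θ l)) = -1 ∨ cos (2 * (θ k - θ l)) = 0 := by
  obtain ⟨α, β, γ, h₀₁, h₃₂, h₀₃, h₂₁, h₀₂, h₁₃⟩ := exists_pairing_angles θ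
  have hmin := two_le_pairingSum hq₁ hq₂ (abs_cos_le_one α) (abs_cos_le_one β) (abs_cos_le_one γ)
  have hαβ := two_mul_one_add_cos_mul_cos_rpow_le hq₁.le α β
  have hβγ := two_mul_one_add_cos_mul_cos_rpow_le hq₁.le β γ
  have hγα := two_mul_one_add_cos_mul_cos_rpow_le hq₁.le γ α
  have hsum : pairingSum q (cos α) (cos β) (cos γ) = (1 + cos α * cos β) ^ q +
    (1 + cos β * cos γ) ^ q + (1 + cos γ * cos α) ^ q := rfl
  rw [lineEnergy_fin_four, h₀₁, h₃₂, h₀₃, h₂₁, h₀₂, h₁₃] at h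
  obtain ⟨rαβ, rβγ, rγα⟩ := mul_eq_of_pairingSum_eq_two hq₁ hq₂ (abs_cos_le_one α)
    (abs_cos_le_one β) (abs_cos_le_one γ) (by linarith)
  obtain ⟨e₀₁, e₃₂⟩ := cos_add_sub_eq_of_two_mul_rpow_eq hq₁ (hαβ.antisymm (by linarith))
  obtain ⟨e₀₃, e₂₁⟩ := cos_add_sub_eq_of_two_mul_rpow_eq hq₁ (hβγ.antisymm (by linarith))
  obtain ⟨e₀₂, e₁₃⟩ := cos_add_sub_eq_of_two_mul_rpow_eq hq₁ (hγα.antisymm (by linarith))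
  exact forall_ne_fin_four (P := fun c => c = -1 ∨ c = 0) (by rwa [h₀₁, e₀₁])
    (by rwa [h₃₂, e₃₂]) (by rwa [h₀₃, e₀₃]) (by rwa [h₂₁, e₂₁]) (by rwa [h₀₂, e₀₂])
    (by rwa [h₁₃, e₁₃]) k l hkl

theorem card_fin_four_bound (q : ℝ) :
    (Fintype.card (Fin 4) : ℝ) ^ 2 * ((q + 1) / 2) - Fintype.card (Fin 4) * (2 * q) = 8 := by
  rw [Fintype.card_fin]
  push_cast
  ring

theorem eight_le_lineEnergy_rpow {q : ℝ} (hq : 1 < q) (θ : Fin 4 → ℝ) :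
    8 ≤ lineEnergy (fun t => (1 + t) ^ q) θ := by
  rcases le_or_gt q 2 with hq₂ | hq₂
  · exact eight_le_lineEnergy_rpow_of_le_two hq hq₂ θ
  · exact card_fin_four_bound q ▸ le_lineEnergy_rpow hq₂.le θ

theorem cos_eq_of_lineEnergy_rpow_eq_eight {q : ℝ} (hq : 1 < q) {θ : Fin 4 → ℝ}
    (h : lineEnergy (fun t => (1 + t) ^ q) θ = 8) {k l : Fin 4} (hkl : k ≠ l) :
    cos (2 * (θ k - θ l)) = -1 ∨ cos (2 * (θ k - θ l)) = 0 := by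
  rcases le_or_gt q 2 with hq₂ | hq₂
  · exact cos_eq_of_lineEnergy_rpow_eq_eight_of_le_two hq hq₂ h hkl
  · exact cos_eq_of_lineEnergy_rpow_eq hq₂ (h.trans (card_fin_four_bound q).symm) hkl

theorem lineEnergy_rpow_four_equally_spaced {q : ℝ} (hq : q ≠ 0) :
    lineEnergy (fun t => (1 + t) ^ q) (fun k : Fin 4 => (k : ℕ) * π / 4) = 8 := by
  have h₀₁ : 2 * (0 * π / 4 - 1 * π / 4) = -(π / 2) := by ring
  have h₃₂ : 2 * (3 * π / 4 - 2 * π / 4) = π / 2 := by ring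
  have h₀₃ : 2 * (0 * π / 4 - 3 * π / 4) = π / 2 - 2 * π := by ring
  have h₂₁ : 2 * (2 * π / 4 - 1 * π / 4) = π / 2 := by ring
  have h₀₂ : 2 * (0 * π / 4 - 2 * π / 4) = -π := by ring
  have h₁₃ : 2 * (1 * π / 4 - 3 * π / 4) = -π := by ring
  simp only [lineEnergy_fin_four, Fin.coe_ofNat_eq_mod, Nat.reduceMod, Nat.cast_ofNat,
    Nat.cast_zero, Nat.cast_one, h₀₁, h₃₂, h₀₃, h₂₁, h₀₂, h₁₃, cos_neg, cos_sub_two_pi,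
    cos_pi_div_two, cos_pi, add_zero, add_neg_cancel, Real.one_rpow, Real.zero_rpow hq]
  norm_num

end FourLines

section Configurations

/-- The unit vector of the plane at angle `t`. -/
noncomputable def unitVec (t : ℝ) : EuclideanSpace ℝ (Fin 2) :=
  !₂[cos t, sin t]

theorem halfCircle_eq_unitVec (N : ℕ) :
    halfCircle N = fun k : Fin N => unitVec ((k : ℕ) * π / N) := rfl

theorem inner_unitVec (s t : ℝ) : ⟪unitVec s, unitVec t⟫ = cos (s - t) := by
  simp [unitVec, PiLp.inner_apply, Fin.sum_univ_two, Real.cos_sub, mul_comm]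

theorem unitVec_eq_repr_exp (t : ℝ) :
    unitVec t = Complex.orthonormalBasisOneI.repr (Complex.exp (t * Complex.I)) := by
  ext i
  fin_cases i <;> simp [unitVec, Complex.exp_ofReal_mul_I_re, Complex.exp_ofReal_mul_I_im]

theorem exists_unitVec_eq {x : EuclideanSpace ℝ (Fin 2)} (hx : ‖x‖ = 1) :
    ∃ t, unitVec t = x := by
  set z := Complex.orthonormalBasisOneI.repr.symm x with hz
  refine ⟨z.arg, ?_⟩
  have hnorm : ‖z‖ = 1 := by rw [hz, LinearIsometryEquiv.norm_map, hx]
  have hpolar := Complex.norm_mul_exp_arg_mul_I z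
  rw [hnorm, Complex.ofReal_one, one_mul] at hpolar
  rw [unitVec_eq_repr_exp, hpolar, hz, LinearIsometryEquiv.apply_symm_apply]

theorem unitVec_add_int_mul_pi (t : ℝ) (n : ℤ) :
    unitVec (t + n * π) = ((-1) ^ n : ℝ) • unitVec t := by
  ext i
  fin_cases i <;> simp [unitVec, cos_add_int_mul_pi, sin_add_int_mul_pi]

/-- Rotation of the plane by the angle `t`. -/
noncomputable def planeRotation (t : ℝ) :
    EuclideanSpace ℝ (Fin 2) ≃ₗᵢ[ℝ] EuclideanSpace ℝ (Fin 2) :=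
  (Complex.orthonormalBasisOneI.repr.symm.trans (rotation (Circle.exp t))).trans
    Complex.orthonormalBasisOneI.repr

theorem planeRotation_unitVec (s t : ℝ) : planeRotation t (unitVec s) = unitVec (t + s) := by
  simp [planeRotation, unitVec_eq_repr_exp, rotation_apply, Circle.coe_exp, ← Complex.exp_add,
    add_mul]

theorem two_mul_sq_rpow (c q : ℝ) : (2 * c ^ 2) ^ q = 2 ^ q * |c| ^ (2 * q) := by
  rw [Real.mul_rpow zero_le_two (sq_nonneg c), ← sq_abs, ← Real.rpow_natCast,
    ← Real.rpow_mul (abs_nonneg c), Nat.cast_ofNat]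

theorem lineEnergy_rpow_eq_framePotential {N : ℕ} (q : ℝ) (θ : Fin N → ℝ) :
    lineEnergy (fun t => (1 + t) ^ q) θ =
      2 ^ q * framePotential 2 N (2 * q) (fun k => unitVec (θ k)) := by
  have hterm (s t : ℝ) : (1 + cos (2 * (s - t))) ^ q =
      2 ^ q * |⟪unitVec s, unitVec t⟫| ^ (2 * q) := by
    rw [inner_unitVec, ← two_mul_sq_rpow, cos_two_mul, add_sub_cancel]
  simp only [lineEnergy, framePotential, hterm, Finset.mul_sum, mul_ite, mul_zero]

theorem exists_perm_val_eq_emod {N : ℕ} [NeZero N] (n : Fin N → ℤ)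
    (hn : ∀ i j, i ≠ j → ¬ (N : ℤ) ∣ n i - n j) :
    ∃ σ : Equiv.Perm (Fin N), ∀ i, ((σ i : ℕ) : ℤ) = n i % N := by
  have hN : (0 : ℤ) < N := by exact_mod_cast NeZero.pos N
  have hresidue (i : Fin N) : ∃ k : Fin N, ((k : ℕ) : ℤ) = n i % N := by
    have hlt := Int.emod_lt_of_pos (n i) hN
    have hnonneg := Int.emod_nonneg (n i) hN.ne'
    exact ⟨⟨(n i % N).toNat, by omega⟩, Int.toNat_of_nonneg hnonneg⟩
  choose residue hresidue using hresidue
  have hinj : Function.Injective residue := by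
    intro i j hij
    by_contra hne
    refine hn j i (Ne.symm hne) (Int.ModEq.dvd ?_)
    rw [Int.ModEq, ← hresidue, ← hresidue, hij]
  exact ⟨Equiv.ofBijective residue (Finite.injective_iff_bijective.1 hinj), hresidue⟩

theorem equivConfig_halfCircle {N : ℕ} [NeZero N] (t : ℝ) (n : Fin N → ℤ)
    (hn : ∀ i j, i ≠ j → ¬ (N : ℤ) ∣ n i - n j) :
    EquivConfig 2 N (halfCircle N) (fun i => unitVec (t + n i * π / N)) := by
  obtain ⟨σ, hσ⟩ := exists_perm_val_eq_emod n hn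
  refine ⟨planeRotation t, σ, fun i => (-1) ^ (n i / (N : ℤ)),
    fun i => (Int.even_or_odd _).imp Even.neg_one_zpow Odd.neg_one_zpow, fun i => ?_⟩
  have hdiv : (n i : ℝ) = (σ i : ℕ) + N * (n i / N : ℤ) := by
    rw [← Int.cast_natCast (σ i : ℕ), hσ]
    exact_mod_cast (Int.emod_add_mul_ediv (n i) N).symm
  have hangle : t + n i * π / N = t + (σ i : ℕ) * π / N + (n i / N : ℤ) * π := by
    have : (N : ℝ) ≠ 0 := NeZero.ne _
    rw [hdiv]
    field_simp
    ring
  simp only [hangle, unitVec_add_int_mul_pi, halfCircle_eq_unitVec, planeRotation_unitVec]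

theorem exists_int_mul_pi_div_four_of_cos {d : ℝ}
    (h : cos (2 * d) = -1 ∨ cos (2 * d) = 0) : ∃ n : ℤ, d = n * π / 4 ∧ ¬ 4 ∣ n := by
  rcases h with h | h
  · obtain ⟨m, hm⟩ := Real.cos_eq_neg_one_iff.1 h
    refine ⟨4 * m + 2, ?_, by omega⟩
    push_cast
    linarith
  · obtain ⟨m, hm⟩ := Real.cos_eq_zero_iff.1 h
    refine ⟨2 * m + 1, ?_, by omega⟩
    push_cast
    linarith

theorem equivConfig_halfCircle_four {θ : Fin 4 → ℝ}
    (h : ∀ k l, k ≠ l → cos (2 * (θ k - θ l)) = -1 ∨ cos (2 * (θ k - θ l)) = 0) :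
    EquivConfig 2 4 (halfCircle 4) (fun i => unitVec (θ i)) := by
  have hmultiple (k : Fin 4) : ∃ n : ℤ, θ k = θ 0 + n * π / 4 := by
    rcases eq_or_ne k 0 with rfl | hk
    · exact ⟨0, by simp⟩
    · obtain ⟨n, hn, -⟩ := exists_int_mul_pi_div_four_of_cos (h k 0 hk)
      exact ⟨n, by linarith⟩
  choose n hn using hmultiple
  have hdistinct (k l : Fin 4) (hkl : k ≠ l) : ¬ (4 : ℤ) ∣ n k - n l := by
    obtain ⟨m, hm, hndvd⟩ := exists_int_mul_pi_div_four_of_cos (h k l hkl)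
    have : ((n k - n l : ℤ) : ℝ) = m := by
      refine mul_right_cancel₀ pi_ne_zero ?_
      push_cast
      linarith [hn k, hn l]
    rwa [Int.cast_inj.1 this]
  rw [funext hn]
  exact_mod_cast equivConfig_halfCircle (θ 0) n hdistinct

end Configurations

/-- For `p > 2`, `X_4^(h)` is the unique (up to equivalence) minimizer of the
`p`-frame potential `FP_{p,4,2}` over `S(4,2)`. -/
theorem halfCircle_four_unique_minimizer
    (p : ℝ) (hp : 2 < p) :
    (∀ X : Fin 4 → EuclideanSpace ℝ (Fin 2), (∀ i, ‖X i‖ = 1) →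
      framePotential 2 4 p (halfCircle 4) ≤ framePotential 2 4 p X) ∧
    (∀ X : Fin 4 → EuclideanSpace ℝ (Fin 2), (∀ i, ‖X i‖ = 1) →
      framePotential 2 4 p X = framePotential 2 4 p (halfCircle 4) →
      EquivConfig 2 4 (halfCircle 4) X) := by
  obtain ⟨q, rfl⟩ : ∃ q, p = 2 * q := ⟨p / 2, by ring⟩
  have hq : 1 < q := by linarith
  have hhalf : 2 ^ q * framePotential 2 4 (2 * q) (halfCircle 4) = 8 := by
    rw [halfCircle_eq_unitVec, ← lineEnergy_rpow_eq_framePotential]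
    exact lineEnergy_rpow_four_equally_spaced (by linarith)
  refine ⟨fun X hX => ?_, fun X hX heq => ?_⟩
  all_goals
    choose θ hθ using fun i => exists_unitVec_eq (hX i)
    obtain rfl := funext hθ
  · have hmin := eight_le_lineEnergy_rpow hq θ
    rw [lineEnergy_rpow_eq_framePotential, ← hhalf] at hmin
    exact le_of_mul_le_mul_left hmin (by positivity)
  · refine equivConfig_halfCircle_four fun k l => cos_eq_of_lineEnergy_rpow_eq_eight hq ?_
    rw [lineEnergy_rpow_eq_framePotential, heq, hhalf]
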